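/- arXiv:2407.20211 — 3 statements merged into one kernel-verified Lean document; each statement's English description precedes it below -/
import Mathlib

section
/- Let p be a prime, ℓ ≥ 2 an integer, and n ≥ 2. Then the complex roots of the integer polynomial Q_{p^{(n)}}/Q_{p^{(n−1)}} are exactly the p^{(n)} − p^{(n−1)} pairwise distinct real numbers 2·cos(kπ/p^{(n)}) for 1 ≤ k ≤ p^{(n)} − 1 with p ∤ k. -/
/-!
Substituting `z = 2 cos θ` gives `Q_N(2 cos θ) sin θ = sin (N θ)`, so the `N - 1` numbers
`2 cos (kπ/N)`, `0 < k < N`, are roots of `Q_N`. They are distinct because `cos` is injective on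
`[0, π]`, and `Q_N` has degree `N - 1`, so they are all the roots and each is simple
(`roots_chebQ`).

Put `N = p^{(n)}` and `M = p^{(n-1)}`, so that `N = p M`. As `Q_N = Q_M R` has only simple roots,
the roots of `R` are the roots of `Q_N` that are not roots of `Q_M`. The roots of `Q_M` are
`2 cos (jπ/M) = 2 cos (pjπ/N)`, i.e. the roots of `Q_N` whose index is a multiple of `p`.
-/

/-- The normalized Chebyshev polynomial of the second kind:
`Q 0 = 0`, `Q 1 = 1`, `Q 2 = X`, and `Q (k+2) = X * Q (k+1) - Q k`. -/
noncomputable def chebQ : ℕ → Polynomial ℤ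
  | 0 => 0
  | 1 => 1
  | (k + 2) => Polynomial.X * chebQ (k + 1) - chebQ k

/-- `p^{(0)} = 1` and `p^{(n)} = ℓ · p^{n-1}` for `n ≥ 1`. -/
def plPow (p ℓ : ℕ) : ℕ → ℕ
  | 0 => 1
  | (n + 1) => ℓ * p ^ n

open Polynomial in
/-- `chebQ` is, up to an index shift, Mathlib's rescaled Chebyshev polynomial `S`. -/
theorem map_chebQ (N : ℕ) :
    (chebQ N).map (algebraMap ℤ ℂ) = Chebyshev.S ℂ ((N : ℤ) - 1) := by
  induction N using Nat.twoStepInduction with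
  | zero => simp [chebQ]
  | one => simp [chebQ]
  | more k h0 h1 =>
    rw [chebQ, Polynomial.map_sub, Polynomial.map_mul, h0, h1, map_X,
      Chebyshev.S_eq ℂ (((k + 2 : ℕ) : ℤ) - 1)]
    push_cast
    ring_nf

open Polynomial in
/-- The degree is read off from `S (2X) = U`. -/
theorem degree_map_chebQ (m : ℕ) :
    ((chebQ (m + 1)).map (algebraMap ℤ ℂ)).degree = m := by
  have hU : (Chebyshev.U ℂ (m : ℤ)).natDegree = m := Chebyshev.natDegree_U_natCast ℂ m
  have h2 : (2 * X : ℂ[X]).natDegree = 1 := by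
    exact natDegree_C_mul_X (2 : ℂ) two_ne_zero
  rw [← Chebyshev.S_comp_two_mul_X, natDegree_comp, h2, mul_one] at hU
  have h0 : Chebyshev.S ℂ (m : ℤ) ≠ 0 := by
    intro h
    have := Chebyshev.S_comp_two_mul_X ℂ (m : ℤ)
    rw [h, zero_comp] at this
    exact Chebyshev.U_ne_zero ℂ (m : ℤ) (by omega) this.symm
  rw [map_chebQ]
  push_cast
  rw [add_sub_cancel_right, degree_eq_natDegree h0, hU]

/-- The `k`-th root `2 cos (kπ/N)` of `chebQ N`, as a complex number. -/
noncomputable def chebRoot (N k : ℕ) : ℂ := ((2 * Real.cos (k * Real.pi / N) : ℝ) : ℂ)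

theorem chebRoot_injOn (N : ℕ) : Set.InjOn (chebRoot N) (Set.Ioo 0 N) := by
  rintro a ⟨ha0, ha⟩ b ⟨hb0, hb⟩ hab
  have hN : (0 : ℝ) < N := by exact_mod_cast ha0.trans ha
  have key : ∀ c : ℕ, c < N → (c * Real.pi / N : ℝ) ∈ Set.Icc 0 Real.pi := by
    intro c hc
    refine ⟨by positivity, ?_⟩
    have : (c : ℝ) ≤ N := by exact_mod_cast hc.le
    rw [div_le_iff₀ hN, mul_comm]
    exact mul_le_mul_of_nonneg_left this Real.pi_pos.le
  have h1 : Real.cos (a * Real.pi / N) = Real.cos (b * Real.pi / N) := by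
    have h : (2 * Real.cos (a * Real.pi / N) : ℝ) = 2 * Real.cos (b * Real.pi / N) :=
      Complex.ofReal_injective hab
    linarith
  have h2 := Real.injOn_cos (key a ha) (key b hb) h1
  have hpi := Real.pi_pos.ne'
  field_simp at h2
  exact_mod_cast h2

open Polynomial in
theorem eval_chebRoot {N k : ℕ} (hk0 : 0 < k) (hk : k < N) :
    ((chebQ N).map (algebraMap ℤ ℂ)).eval (chebRoot N k) = 0 := by
  have hN : (0 : ℝ) < N := by exact_mod_cast hk0.trans hk
  have hk' : (0 : ℝ) < k := by exact_mod_cast hk0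
  have hsin : Real.sin (k * Real.pi / N) ≠ 0 := by
    refine (Real.sin_pos_of_pos_of_lt_pi (by positivity) ?_).ne'
    have : (k : ℝ) < N := by exact_mod_cast hk
    rw [div_lt_iff₀ hN, mul_comm]
    exact mul_lt_mul_of_pos_left this Real.pi_pos
  have h := Polynomial.Chebyshev.S_two_mul_complex_cos ((k * Real.pi / N : ℝ) : ℂ) ((N : ℤ) - 1)
  have hz : Complex.sin (((((N : ℤ) - 1 : ℤ) : ℂ) + 1) * ((k * Real.pi / N : ℝ) : ℂ)) = 0 := by
    have : ((((N : ℤ) - 1 : ℤ) : ℂ) + 1) * ((k * Real.pi / N : ℝ) : ℂ) = k * Real.pi := by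
      have : (N : ℂ) ≠ 0 := by exact_mod_cast hN.ne'
      push_cast
      field_simp
      ring
    rw [this, Complex.sin_nat_mul_pi]
  rw [hz, ← Complex.ofReal_sin, ← Complex.ofReal_cos] at h
  rw [map_chebQ, chebRoot]
  push_cast at h ⊢
  exact (mul_eq_zero.mp h).resolve_right (by exact_mod_cast hsin)

open Polynomial in
theorem roots_chebQ {N : ℕ} (hN : 0 < N) :
    ((chebQ N).map (algebraMap ℤ ℂ)).roots = ((Finset.Ioo 0 N).image (chebRoot N)).val := by
  obtain ⟨m, rfl⟩ := Nat.exists_eq_succ_of_ne_zero hN.ne'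
  refine roots_eq_of_degree_eq_card (fun x hx ↦ ?_) ?_
  · obtain ⟨k, hk, rfl⟩ := Finset.mem_image.mp hx
    rw [Finset.mem_Ioo] at hk
    exact eval_chebRoot hk.1 hk.2
  · rw [Finset.card_image_of_injOn (by simpa using chebRoot_injOn _), degree_map_chebQ]
    simp

/-- The roots of `chebQ M` are the roots of `chebQ (p * M)` with index divisible by `p`. -/
theorem chebRoot_mul {p : ℕ} (hp : p ≠ 0) (M j : ℕ) :
    chebRoot (p * M) (p * j) = chebRoot M j := by
  unfold chebRoot
  congr 3
  have : (p : ℝ) ≠ 0 := by exact_mod_cast hp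
  push_cast
  rw [mul_assoc, mul_div_mul_left _ _ this]

open Polynomial in
theorem aeval_quotient_eq_zero_iff {p M : ℕ} (hp : 0 < p) (hM : 0 < M) {R : ℤ[X]}
    (hR : chebQ M * R = chebQ (p * M)) (z : ℂ) :
    aeval z R = 0 ↔ ∃ k, (0 < k ∧ k < p * M ∧ ¬ p ∣ k) ∧ chebRoot (p * M) k = z := by
  have hN : 0 < p * M := Nat.mul_pos hp hM
  have hmap := congrArg (Polynomial.map (algebraMap ℤ ℂ)) hR
  rw [Polynomial.map_mul] at hmap
  have hne : (chebQ (p * M)).map (algebraMap ℤ ℂ) ≠ 0 := by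
    obtain ⟨m, hm⟩ := Nat.exists_eq_succ_of_ne_zero hN.ne'
    intro h
    have := degree_map_chebQ m
    rw [← Nat.succ_eq_add_one, ← hm, h, degree_zero] at this
    simp at this
  have hRne : R.map (algebraMap ℤ ℂ) ≠ 0 := by
    intro h
    rw [h, mul_zero] at hmap
    exact hne hmap.symm
  have hroots := roots_mul (hmap ▸ hne)
  rw [hmap, roots_chebQ hN, roots_chebQ hM] at hroots
  have hnd := ((Finset.Ioo 0 (p * M)).image (chebRoot (p * M))).nodup
  rw [hroots, Multiset.nodup_add] at hnd
  have hmem : ∀ w, w ∈ (Finset.Ioo 0 (p * M)).image (chebRoot (p * M)) ↔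
      w ∈ (Finset.Ioo 0 M).image (chebRoot M) ∨ w ∈ (R.map (algebraMap ℤ ℂ)).roots := by
    intro w
    rw [← Finset.mem_val, hroots, Multiset.mem_add, Finset.mem_val]
  have hz : aeval z R = 0 ↔ z ∈ (R.map (algebraMap ℤ ℂ)).roots := by
    rw [mem_roots hRne, IsRoot.def, eval_map_algebraMap]
  rw [hz]
  constructor
  · intro h
    obtain ⟨k, hk, rfl⟩ := Finset.mem_image.mp ((hmem z).mpr (Or.inr h))
    rw [Finset.mem_Ioo] at hk
    refine ⟨k, ⟨hk.1, hk.2, ?_⟩, rfl⟩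
    rintro ⟨j, rfl⟩
    -- A multiple of `p` would give a root common to `Q_M` and `R`.
    refine Multiset.disjoint_left.mp hnd.2.2 (Finset.mem_val.mpr (Finset.mem_image.mpr
      ⟨j, Finset.mem_Ioo.mpr ⟨Nat.pos_of_mul_pos_left hk.1, Nat.lt_of_mul_lt_mul_left hk.2⟩, ?_⟩)) h
    rw [chebRoot_mul hp.ne']
  · rintro ⟨k, ⟨hk0, hk, hpk⟩, rfl⟩
    refine ((hmem _).mp (Finset.mem_image_of_mem _ (Finset.mem_Ioo.mpr ⟨hk0, hk⟩))).resolve_left ?_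
    intro h
    obtain ⟨j, hj, hjk⟩ := Finset.mem_image.mp h
    rw [Finset.mem_Ioo] at hj
    rw [← chebRoot_mul hp.ne'] at hjk
    have := chebRoot_injOn (p * M)
      ⟨Nat.mul_pos hp hj.1, Nat.mul_lt_mul_of_pos_left hj.2 hp⟩ ⟨hk0, hk⟩ hjk
    exact hpk ⟨j, this.symm⟩

theorem ncard_not_dvd {p M : ℕ} (hp : 0 < p) :
    Set.ncard {k : ℕ | 1 ≤ k ∧ k ≤ p * M - 1 ∧ ¬ p ∣ k} = p * M - M := by
  -- Adding the endpoint `p * M`, a multiple of `p`, does not change the set.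
  have hset : {k : ℕ | 1 ≤ k ∧ k ≤ p * M - 1 ∧ ¬ p ∣ k} =
      ((Finset.Ioc 0 (p * M)).filter (fun k => ¬ p ∣ k) : Finset ℕ) := by
    ext k
    simp only [Set.mem_ofPred_eq, Finset.coe_filter, Finset.mem_Ioc]
    constructor
    · rintro ⟨h1, h2, h3⟩
      exact ⟨⟨h1, by omega⟩, h3⟩
    · rintro ⟨⟨h1, h2⟩, h3⟩
      have : k ≠ p * M := by
        rintro rfl
        exact h3 (dvd_mul_right p M)
      exact ⟨h1, by omega, h3⟩
  rw [hset, Set.ncard_coe_finset]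
  have h := Finset.card_filter_add_card_filter_not (s := Finset.Ioc 0 (p * M)) (fun k => p ∣ k)
  rw [Nat.Ioc_filter_dvd_card_eq_div, Nat.mul_div_cancel_left M hp, Nat.card_Ioc] at h
  omega

/-- The complex roots of the integer polynomial `Q_{p^{(n)}}/Q_{p^{(n-1)}}` are exactly the
`p^{(n)} - p^{(n-1)}` pairwise distinct real numbers `2·cos(kπ/p^{(n)})` for
`1 ≤ k ≤ p^{(n)} - 1` with `p ∤ k`. -/
theorem roots_of_chebQ_quotient (p ℓ n : ℕ) (hp : p.Prime) (hℓ : 2 ≤ ℓ) (hn : 2 ≤ n)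
    (R : Polynomial ℤ) (hR : chebQ (plPow p ℓ (n - 1)) * R = chebQ (plPow p ℓ n)) :
    ({z : ℂ | Polynomial.aeval z R = 0} =
        (fun k : ℕ => ((2 * Real.cos (k * Real.pi / (plPow p ℓ n)) : ℝ) : ℂ)) ''
          {k : ℕ | 1 ≤ k ∧ k ≤ plPow p ℓ n - 1 ∧ ¬ p ∣ k}) ∧
    Set.InjOn (fun k : ℕ => ((2 * Real.cos (k * Real.pi / (plPow p ℓ n)) : ℝ) : ℂ))
      {k : ℕ | 1 ≤ k ∧ k ≤ plPow p ℓ n - 1 ∧ ¬ p ∣ k} ∧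
    Set.ncard {k : ℕ | 1 ≤ k ∧ k ≤ plPow p ℓ n - 1 ∧ ¬ p ∣ k} =
      plPow p ℓ n - plPow p ℓ (n - 1) := by
  obtain ⟨m, rfl⟩ := Nat.exists_eq_add_of_le' hn
  have hN : plPow p ℓ (m + 2) = p * plPow p ℓ (m + 2 - 1) := by
    change ℓ * p ^ (m + 1) = p * (ℓ * p ^ m)
    ring
  have hM : 0 < plPow p ℓ (m + 2 - 1) :=
    Nat.mul_pos (by omega) (Nat.pow_pos hp.pos)
  generalize plPow p ℓ (m + 2 - 1) = M at *
  rw [hN] at hR ⊢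
  have hmem : ∀ k : ℕ, (1 ≤ k ∧ k ≤ p * M - 1 ∧ ¬ p ∣ k) ↔ (0 < k ∧ k < p * M ∧ ¬ p ∣ k) := by
    have := Nat.mul_pos hp.pos hM
    intro k
    constructor <;> rintro ⟨h1, h2, h3⟩ <;> exact ⟨by omega, by omega, h3⟩
  refine ⟨?_, ?_, ncard_not_dvd hp.pos⟩
  · ext z
    simp only [Set.mem_ofPred_eq, Set.mem_image, hmem]
    exact aeval_quotient_eq_zero_iff hp.pos hM hR z
  · intro a ha b hb hab
    have ha' := (hmem a).mp ha
    have hb' := (hmem b).mp hb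
    exact chebRoot_injOn (p * M) ⟨ha'.1, ha'.2.1⟩ ⟨hb'.1, hb'.2.1⟩ hab
end

section
/- Let p be a prime, ℓ ≥ 2 an integer, and n ≥ 2. If it is not the case that p = 2, n = 2 and ℓ is odd, then there exists a polynomial P⁺ ∈ ℤ[X] such that Q_{p^{(n)}}/Q_{p^{(n−1)}}(X) = P⁺(X² − 2). In the exceptional case p = 2, n = 2 and ℓ odd, there exists P⁺ ∈ ℤ[X] such that Q_{p^{(n)}}/Q_{p^{(n−1)}}(X) = X·P⁺(X² − 2). -/
open Polynomial

theorem chebQ_comp_neg (k : ℕ) : (chebQ k).comp (-X) = (-1) ^ (k + 1) * chebQ k := by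
  induction k using Nat.twoStepInduction with
  | zero => simp [chebQ]
  | one => simp [chebQ]
  | more k h0 h1 =>
    simp only [chebQ, sub_comp, mul_comp, X_comp, h0, h1]
    ring

theorem chebQ_eval_two (k : ℕ) : (chebQ k).eval 2 = k := by
  induction k using Nat.twoStepInduction with
  | zero => simp [chebQ]
  | one => simp [chebQ]
  | more k h0 h1 =>
    simp only [chebQ, eval_sub, eval_mul, eval_X, h0, h1]
    push_cast
    ring

theorem chebQ_ne_zero {k : ℕ} (hk : k ≠ 0) : chebQ k ≠ 0 := fun h => by
  have := chebQ_eval_two k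
  rw [h, eval_zero] at this
  exact hk (by exact_mod_cast this.symm)

/-- The odd coefficients of an even polynomial vanish, because `ℤ` has no `2`-torsion. -/
theorem exists_comp_of_even {f : ℤ[X]} (hf : f.comp (-X) = f) :
    ∃ P : ℤ[X], f = P.comp (X ^ 2 - 2) := by
  have hexp : expand ℤ 2 (contract 2 f) = f := by
    ext i
    rw [coeff_expand two_pos, coeff_contract two_ne_zero]
    split_ifs with h
    · rw [Nat.div_mul_cancel h]
    · have hi := congrArg (fun g => coeff g i) hf
      rw [neg_eq_neg_one_mul, ← C_1, ← C_neg, comp_C_mul_X_coeff,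
        (Nat.not_even_iff_odd.mp (mt Even.two_dvd h)).neg_one_pow] at hi
      linarith
  -- `f = g(X²)` with `g = contract 2 f`, so shifting `g` by `2` gives `P`.
  refine ⟨(contract 2 f).comp (X + 2), ?_⟩
  conv_lhs => rw [← hexp, expand_eq_comp_X_pow]
  simp [comp_assoc]

theorem exists_X_mul_comp_of_odd {f : ℤ[X]} (hf : f.comp (-X) = -f) :
    ∃ P : ℤ[X], f = X * P.comp (X ^ 2 - 2) := by
  have h0 : f.coeff 0 = 0 := by
    have h := congrArg (eval 0) hf
    simp only [eval_comp, eval_neg, eval_X, neg_zero] at h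
    rw [coeff_zero_eq_eval_zero]
    linarith
  obtain ⟨g, rfl⟩ := X_dvd_iff.mpr h0
  have hg : g.comp (-X) = g := by
    simp only [mul_comp, X_comp, neg_mul, neg_inj] at hf
    exact mul_left_cancel₀ X_ne_zero hf
  obtain ⟨P, hP⟩ := exists_comp_of_even hg
  exact ⟨P, by rw [← hP]⟩

/-- The quotient `Q_b / Q_a` has parity `a + b`. -/
theorem quotient_comp_neg {a b : ℕ} (ha : a ≠ 0) {R : ℤ[X]} (hR : chebQ a * R = chebQ b) :
    R.comp (-X) = (-1) ^ (a + b) * R := by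
  have h := congrArg (fun g => g.comp (-X)) hR
  simp only [mul_comp, chebQ_comp_neg] at h
  have hs : ((-1 : ℤ[X]) ^ (a + 1)) * (-1) ^ (a + 1) = 1 := by
    rw [← mul_pow]
    simp
  refine mul_left_cancel₀ (chebQ_ne_zero ha) ?_
  calc chebQ a * R.comp (-X)
      = (-1) ^ (a + 1) * ((-1) ^ (a + 1) * chebQ a * R.comp (-X)) := by
        linear_combination (-(chebQ a * R.comp (-X))) * hs
    _ = chebQ a * ((-1) ^ (a + b) * R) := by
        rw [h, ← hR]
        ring

/-- Except when `p = 2`, `n = 2`, and `ℓ` is odd, the integer polynomial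
`Q_{p^{(n)}}/Q_{p^{(n-1)}}` can be written as `P⁺(X² - 2)` for an integer polynomial `P⁺`;
in the exceptional case it can be written as `X·P⁺(X² - 2)`. -/
theorem chebQ_quotient_comp (p ℓ n : ℕ) (hp : p.Prime) (hℓ : 2 ≤ ℓ) (hn : 2 ≤ n)
    (R : Polynomial ℤ) (hR : chebQ (plPow p ℓ (n - 1)) * R = chebQ (plPow p ℓ n)) :
    (¬ (p = 2 ∧ n = 2 ∧ Odd ℓ) →
      ∃ P : Polynomial ℤ, R = P.comp (Polynomial.X ^ 2 - 2)) ∧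
    ((p = 2 ∧ n = 2 ∧ Odd ℓ) →
      ∃ P : Polynomial ℤ, R = Polynomial.X * P.comp (Polynomial.X ^ 2 - 2)) := by
  obtain ⟨m, rfl⟩ : ∃ m, n = m + 2 := ⟨n - 2, by omega⟩
  have hR' : chebQ (ℓ * p ^ m) * R = chebQ (ℓ * p ^ (m + 1)) := hR
  have key := quotient_comp_neg (by have := hp.pos; positivity) hR'
  constructor
  · intro hne
    refine exists_comp_of_even ?_
    have hev : Even (ℓ * p ^ m + ℓ * p ^ (m + 1)) := by
      rcases hp.eq_two_or_odd' with rfl | hodd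
      · have : m ≠ 0 ∨ Even ℓ := by
          by_contra! hc
          exact hne ⟨rfl, by omega, Nat.not_even_iff_odd.mp hc.2⟩
        simp only [Nat.even_add, Nat.even_mul, Nat.even_pow, even_two]
        tauto
      · have : ¬ Even p := Nat.not_even_iff_odd.mpr hodd
        simp only [Nat.even_add, Nat.even_mul, Nat.even_pow]
        tauto
    rwa [hev.neg_one_pow, one_mul] at key
  · rintro ⟨rfl, hm, hodd⟩
    obtain rfl : m = 0 := by omega
    refine exists_X_mul_comp_of_odd ?_
    have ho : Odd (ℓ * 2 ^ 0 + ℓ * 2 ^ (0 + 1)) := by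
      rw [← Nat.not_even_iff_odd] at hodd ⊢
      simp only [Nat.even_add, Nat.even_mul, Nat.even_pow, even_two]
      tauto
    rwa [ho.neg_one_pow, neg_one_mul] at key
end

section
/- Let p = 2, let ℓ ≥ 3 be an odd integer, and let n ≥ 2. Then there is a ring isomorphism 𝔽₂[X]/(R̄_n, Q̄_{2^{(n−1)}}) ≅ 𝔽₂[Z]/(Q̄_ℓ(Z)^{2^{n−2}}) × 𝔽₂[Z]/(Z^{2^{n−2}−1}), where R_n := Q_{2^{(n)}}/Q_{2^{(n−1)}} ∈ ℤ[X] and the bar denotes reduction of integer polynomials modulo 2. -/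
/-- The reduction `Q̄_k` of `Q_k` modulo `2`. -/
noncomputable def chebBar (k : ℕ) : Polynomial (ZMod 2) :=
  (chebQ k).map (Int.castRingHom (ZMod 2))

lemma chebBar_zero : chebBar 0 = 0 := by simp [chebBar, chebQ]

lemma chebBar_one : chebBar 1 = 1 := by simp [chebBar, chebQ]

lemma chebBar_add_two (k : ℕ) :
    chebBar (k + 2) = Polynomial.X * chebBar (k + 1) + chebBar k := by
  simp [chebBar, chebQ, CharTwo.sub_eq_add]

/-- The doubling rules modulo `2`; the even and odd cases are proved by a joint induction. -/
lemma chebBar_double_and (k : ℕ) :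
    chebBar (2 * k) = Polynomial.X * chebBar k ^ 2 ∧
      chebBar (2 * k + 1) = chebBar (k + 1) ^ 2 + chebBar k ^ 2 := by
  induction k with
  | zero => simp [chebBar_zero, chebBar_one]
  | succ k ih =>
    obtain ⟨h0, h1⟩ := ih
    have h2 : (2 : Polynomial (ZMod 2)) = 0 := CharTwo.two_eq_zero
    have he : chebBar (2 * (k + 1)) = Polynomial.X * chebBar (k + 1) ^ 2 := by
      rw [show 2 * (k + 1) = 2 * k + 2 by ring, chebBar_add_two, h0, h1]
      linear_combination Polynomial.X * chebBar k ^ 2 * h2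
    refine ⟨he, ?_⟩
    rw [show 2 * (k + 1) + 1 = 2 * k + 1 + 2 by ring, chebBar_add_two,
      show 2 * k + 1 + 1 = 2 * (k + 1) by ring, he, h1, chebBar_add_two k]
    linear_combination (-Polynomial.X * chebBar (k + 1) * chebBar k) * h2

lemma chebBar_double (k : ℕ) : chebBar (2 * k) = Polynomial.X * chebBar k ^ 2 :=
  (chebBar_double_and k).1

lemma chebBar_mul_two_pow (ℓ m : ℕ) :
    chebBar (ℓ * 2 ^ m) = chebBar ℓ ^ 2 ^ m * Polynomial.X ^ (2 ^ m - 1) := by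
  induction m with
  | zero => simp
  | succ m ih =>
    have hexp : 2 ^ (m + 1) - 1 = 1 + (2 ^ m - 1) * 2 := by
      have := Nat.one_le_two_pow (n := m)
      omega
    rw [show ℓ * 2 ^ (m + 1) = 2 * (ℓ * 2 ^ m) by ring, chebBar_double, ih, hexp]
    ring

lemma chebBar_odd_isCoprime_X (k : ℕ) :
    IsCoprime (chebBar (2 * k + 1)) (Polynomial.X : Polynomial (ZMod 2)) := by
  induction k with
  | zero => simpa [chebBar_one] using isCoprime_one_left
  | succ k ih =>
    rw [show 2 * (k + 1) + 1 = 2 * k + 1 + 2 by ring, chebBar_add_two, add_comm]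
    exact ih.add_mul_left_left _

/-- The Grothendieck ring of the stable category of `Ver_{2^{(n)}}^{ζ}`:
`𝔽₂[X]/(R̄_n, Q̄_{2^{(n-1)}}) ≅ 𝔽₂[Z]/(Q̄_ℓ(Z)^{2^{n-2}}) × 𝔽₂[Z]/(Z^{2^{n-2}-1})`,
where `R_n = Q_{2^{(n)}}/Q_{2^{(n-1)}}` and bars denote reduction mod `2`. -/
theorem grothendieck_stable_two (ℓ n : ℕ) (hℓ : 3 ≤ ℓ) (hodd : Odd ℓ) (hn : 2 ≤ n)
    (R : Polynomial ℤ) (hR : chebQ (plPow 2 ℓ (n - 1)) * R = chebQ (plPow 2 ℓ n)) :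
    Nonempty (
      (Polynomial (ZMod 2) ⧸ Ideal.span
          {R.map (Int.castRingHom (ZMod 2)),
            (chebQ (plPow 2 ℓ (n - 1))).map (Int.castRingHom (ZMod 2))}) ≃+*
      ((Polynomial (ZMod 2) ⧸ Ideal.span
          {((chebQ ℓ).map (Int.castRingHom (ZMod 2))) ^ (2 ^ (n - 2))}) ×
        (Polynomial (ZMod 2) ⧸ Ideal.span
          {(Polynomial.X : Polynomial (ZMod 2)) ^ (2 ^ (n - 2) - 1)}))) := by
  obtain ⟨m, rfl⟩ := Nat.exists_eq_add_of_le' hn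
  have e1 : plPow 2 ℓ (m + 2 - 1) = ℓ * 2 ^ m := rfl
  have e2 : plPow 2 ℓ (m + 2) = 2 * (ℓ * 2 ^ m) := by
    change ℓ * 2 ^ (m + 1) = _
    ring
  have hcop : IsCoprime (chebBar ℓ) (Polynomial.X : Polynomial (ZMod 2)) := by
    obtain ⟨k, rfl⟩ := hodd
    exact chebBar_odd_isCoprime_X k
  have hne : chebBar (ℓ * 2 ^ m) ≠ 0 := by
    have hℓ0 : chebBar ℓ ≠ 0 := by
      intro h
      rw [h, isCoprime_zero_left] at hcop
      exact Polynomial.not_isUnit_X hcop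
    rw [chebBar_mul_two_pow]
    exact mul_ne_zero (pow_ne_zero _ hℓ0) (pow_ne_zero _ Polynomial.X_ne_zero)
  have hRbar : R.map (Int.castRingHom (ZMod 2)) = Polynomial.X * chebBar (ℓ * 2 ^ m) := by
    have h := congrArg (Polynomial.map (Int.castRingHom (ZMod 2))) hR
    rw [e1, e2, Polynomial.map_mul] at h
    change chebBar (ℓ * 2 ^ m) * _ = chebBar (2 * (ℓ * 2 ^ m)) at h
    rw [chebBar_double] at h
    apply mul_left_cancel₀ hne
    rw [h]
    ring
  have hI : Ideal.span {R.map (Int.castRingHom (ZMod 2)),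
        (chebQ (plPow 2 ℓ (m + 2 - 1))).map (Int.castRingHom (ZMod 2))} =
      Ideal.span {chebBar ℓ ^ 2 ^ m} *
        Ideal.span {(Polynomial.X : Polynomial (ZMod 2)) ^ (2 ^ m - 1)} := by
    rw [Ideal.span_singleton_mul_span_singleton, ← chebBar_mul_two_pow, hRbar, e1]
    change Ideal.span {_, chebBar (ℓ * 2 ^ m)} = _
    rw [Ideal.span_insert, sup_eq_right, Ideal.span_singleton_le_span_singleton]
    exact dvd_mul_left _ _
  exact ⟨(Ideal.quotEquivOfEq hI).trans (Ideal.quotientMulEquivQuotientProd _ _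
    ((Ideal.isCoprime_span_singleton_iff _ _).2 hcop.pow))⟩
end
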